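/- arXiv:0802.0993 — 6 statements merged into one kernel-verified Lean document; each statement's English description precedes it below -/
import Mathlib

section
/- Let z ∈ ℝⁿ with zᵢ ≥ 0 for all i, H ∈ ℝ^{n×n}, Φ ∈ ℝ^{n×L}. Then the function f₁(α) = Σᵢ ½(zᵢ − 2√((HΦα)ᵢ + 3/8))² is convex on the convex set Ω = {α ∈ ℝ^L : (HΦα)ᵢ > −3/8 for all i}. -/
/-!
Expanding the square, `½ (c - 2√t)² = ½ c² - 2 c √t + 2 t` for `t ≥ 0`, which is convex in `t`
because `c ≥ 0` and the square root is concave. Each summand of the data-fidelity term is this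
scalar function composed with an affine map of `α`, and convexity survives affine precomposition
and finite sums.
-/

/-- The scalar Anscombe term with observation `c ≥ 0`. The sign of `c` is what turns concavity of
the square root into convexity. -/
theorem convexOn_anscombe {c : ℝ} (hc : 0 ≤ c) :
    ConvexOn ℝ (Set.Ioi (-(3/8 : ℝ)))
      (fun t => (1/2 : ℝ) * (c - 2 * Real.sqrt (t + 3/8))^2) := by
  refine ⟨convex_Ioi _, fun x hx y hy a b ha hb hab => ?_⟩
  simp only [Set.mem_Ioi, smul_eq_mul] at *
  have hx' : 0 ≤ x + 3/8 := by linarith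
  have hy' : 0 ≤ y + 3/8 := by linarith
  have hs := Real.strictConcaveOn_sqrt.concaveOn.2 (x := x + 3/8) hx' (y := y + 3/8) hy' ha hb hab
  simp only [smul_eq_mul] at hs
  have e : a * x + b * y + 3/8 = a * (x + 3/8) + b * (y + 3/8) := by
    linear_combination (-(3/8 : ℝ)) * hab
  have hw : 0 ≤ a * (x + 3/8) + b * (y + 3/8) := by positivity
  have expand : ∀ t : ℝ, 0 ≤ t →
      (1/2 : ℝ) * (c - 2 * Real.sqrt t)^2 = 1/2 * c^2 - 2 * (c * Real.sqrt t) + 2 * t := by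
    intro t ht
    linear_combination 2 * Real.sq_sqrt ht
  rw [e, expand _ hw, expand _ hx', expand _ hy']
  have hcs := mul_le_mul_of_nonneg_left hs hc
  have hb' : b = 1 - a := by linarith
  subst hb'
  linarith

/-- The Anscombe data-fidelity term `f₁(α) = Σᵢ ½ (zᵢ - 2√((HΦα)ᵢ + 3/8))²` (with `zᵢ ≥ 0`)
is convex on the convex set `Ω = {α : (HΦα)ᵢ > -3/8 ∀ i}`. -/
theorem stmt_2 (n L : ℕ) (z : Fin n → ℝ) (hz : ∀ i, 0 ≤ z i)
    (H : Matrix (Fin n) (Fin n) ℝ) (Φ : Matrix (Fin n) (Fin L) ℝ) :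
    ConvexOn ℝ {α : EuclideanSpace ℝ (Fin L) | ∀ i, -(3/8 : ℝ) < H.mulVec (Φ.mulVec α) i}
      (fun α => ∑ i, (1/2 : ℝ) * (z i - 2 * Real.sqrt (H.mulVec (Φ.mulVec α) i + 3/8))^2) := by
  have lin : ∀ (α β : EuclideanSpace ℝ (Fin L)) (a b : ℝ) (i : Fin n),
      H.mulVec (Φ.mulVec (a • α + b • β : EuclideanSpace ℝ (Fin L))) i
        = a • H.mulVec (Φ.mulVec α) i + b • H.mulVec (Φ.mulVec β) i := by
    intro α β a b i
    simp [Matrix.mulVec_add, Matrix.mulVec_smul]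
  constructor
  · intro α hα β hβ a b ha hb hab i
    rw [lin]
    exact convex_Ioi (-(3/8 : ℝ)) (hα i) (hβ i) ha hb hab
  · intro α hα β hβ a b ha hb hab
    simp only [lin]
    rw [Finset.smul_sum, Finset.smul_sum, ← Finset.sum_add_distrib]
    exact Finset.sum_le_sum fun i _ =>
      (convexOn_anscombe (hz i)).2 (hα i) (hβ i) ha hb hab
end

section
/- Let z ∈ ℝⁿ with zᵢ > 0 for all i, let H ∈ ℝ^{n×n} be injective (trivial kernel), and let Φ ∈ ℝ^{n×n} be an orthogonal matrix (ΦᵀΦ = I). Then the function f₁(α) = Σᵢ ½(zᵢ − 2√((HΦα)ᵢ + 3/8))² is strictly convex on the convex set Ω = {α ∈ ℝⁿ : (HΦα)ᵢ > −3/8 for all i}. -/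
/-!
Expanding the square, `½ (c - 2√(t + 3/8))² = c²/2 - 2c√(t + 3/8) + 2(t + 3/8)` for `t > -3/8`,
so for `c > 0` each summand is an affine function plus a positive multiple of `-√`, and is strictly
convex in `t` because `√` is strictly concave on `[0, ∞)`. The map `α ↦ HΦα` is linear and
injective, so two distinct points differ in some coordinate of their images: that coordinate
contributes a strict inequality, the others weak ones.
-/

lemma strictConvexOn_anscombe_term {c : ℝ} (hc : 0 < c) :
    StrictConvexOn ℝ (Set.Ioi (-(3/8 : ℝ)))
      (fun t => (1/2 : ℝ) * (c - 2 * Real.sqrt (t + 3/8))^2) := by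
  refine ⟨convex_Ioi _, ?_⟩
  intro x hx y hy hxy a b ha hb hab
  simp only [Set.mem_Ioi] at hx hy
  have hx' : 0 ≤ x + 3/8 := by linarith
  have hy' : 0 ≤ y + 3/8 := by linarith
  have hs := Real.strictConcaveOn_sqrt.2 (Set.mem_Ici.2 hx') (Set.mem_Ici.2 hy')
    (fun h => hxy (by linarith)) ha hb hab
  simp only [smul_eq_mul] at hs ⊢
  have he : a * (x + 3/8) + b * (y + 3/8) = a * x + b * y + 3/8 := by
    linear_combination (3/8) * hab
  have hw : 0 ≤ a * x + b * y + 3/8 := by rw [← he]; positivity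
  rw [he] at hs
  have expand : ∀ t : ℝ, 0 ≤ t + 3/8 → (1/2 : ℝ) * (c - 2 * Real.sqrt (t + 3/8))^2
      = c^2/2 - 2 * c * Real.sqrt (t + 3/8) + 2 * (t + 3/8) := by
    intro t ht
    linear_combination 2 * Real.sq_sqrt ht
  rw [expand _ hw, expand _ hx', expand _ hy']
  have hm := mul_lt_mul_of_pos_left hs hc
  have hb' : b = 1 - a := by linarith
  subst hb'
  linarith

/-- With `zᵢ > 0`, `H` injective and `Φ` orthogonal (`ΦᵀΦ = I`), the Anscombe data-fidelity
term `f₁(α) = Σᵢ ½ (zᵢ - 2√((HΦα)ᵢ + 3/8))²` is strictly convex on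
`Ω = {α : (HΦα)ᵢ > -3/8 ∀ i}`. -/
theorem stmt_3 (n : ℕ) (z : Fin n → ℝ) (hz : ∀ i, 0 < z i)
    (H : Matrix (Fin n) (Fin n) ℝ)
    (hH : ∀ x : Fin n → ℝ, H.mulVec x = 0 → x = 0)
    (Φ : Matrix (Fin n) (Fin n) ℝ)
    (hΦ : Φ.transpose * Φ = 1) :
    StrictConvexOn ℝ {α : EuclideanSpace ℝ (Fin n) | ∀ i, -(3/8 : ℝ) < H.mulVec (Φ.mulVec α) i}
      (fun α => ∑ i, (1/2 : ℝ) * (z i - 2 * Real.sqrt (H.mulVec (Φ.mulVec α) i + 3/8))^2) := by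
  have hlin : ∀ (a b : ℝ) (x y : EuclideanSpace ℝ (Fin n)) (i : Fin n),
      H.mulVec (Φ.mulVec (a • x + b • y : EuclideanSpace ℝ (Fin n))) i
        = a • H.mulVec (Φ.mulVec x) i + b • H.mulVec (Φ.mulVec y) i := by
    intro a b x y i
    simp [Matrix.mulVec_add, Matrix.mulVec_smul]
  refine ⟨?_, ?_⟩
  · intro x hx y hy a b ha hb hab i
    rw [hlin]
    exact convex_Ioi (-(3/8 : ℝ)) (hx i) (hy i) ha hb hab
  · intro x hx y hy hxy a b ha hb hab
    obtain ⟨j, hj⟩ : ∃ j, H.mulVec (Φ.mulVec x) j ≠ H.mulVec (Φ.mulVec y) j := by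
      by_contra! h
      have h1 := hH (Φ.mulVec x - Φ.mulVec y) (by
        rw [Matrix.mulVec_sub, sub_eq_zero]
        exact funext h)
      have h2 := congrArg Φ.transpose.mulVec (sub_eq_zero.1 h1)
      simp only [Matrix.mulVec_mulVec, hΦ, Matrix.one_mulVec] at h2
      exact hxy (WithLp.ofLp_injective 2 h2)
    simp only [hlin, Finset.smul_sum, ← Finset.sum_add_distrib]
    refine Finset.sum_lt_sum (fun i _ => ?_) ⟨j, Finset.mem_univ j, ?_⟩
    · exact (strictConvexOn_anscombe_term (hz i)).convexOn.2 (hx i) (hy i) ha.le hb.le hab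
    · exact (strictConvexOn_anscombe_term (hz j)).2 (hx j) (hy j) hj ha hb hab
end

section
/- Let E be a finite-dimensional real inner product space, C′ ⊆ E a nonempty closed convex set, Ψ : E → ℝ convex and continuous, λ > 0, and α ∈ E. Let P denote the metric projection onto C′, let Q(u) denote the unique minimizer of w ↦ λΨ(w) + ½‖w − α‖² + ½‖w − u‖², and set R₁ = 2Q − I and R₂ = 2P − I. Let (ν_t) be a sequence in (0,1) with Σ_t ν_t(1 − ν_t) = +∞, fix γ⁰ ∈ E, and define γ^{t+1} = γ^t + ν_t·(R₁(R₂(γ^t)) − γ^t). Then (γ^t) converges to some γ ∈ E, and P(γ) is the unique minimizer over C′ of w ↦ λΨ(w) + ½‖w − α‖², i.e. P(γ) = prox_{ι_{C′} + λΨ}(α). -/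
/-!
Write `h w = lam * Ψ w + ½‖w - α‖²`, so that `Q` is the proximity operator of `h`, and let
`T = R₁ ∘ R₂`. Three facts carry the proof.

* A minimizer `x` of `φ + ½‖· - u‖²` over a convex set satisfies
  `φ x + ⟪u - x, w - x⟫ ≤ φ w` (`prox_variational`). Hence proximity operators are firmly
  nonexpansive and reflections are nonexpansive, so `T` is nonexpansive. The same inequality
  shows that `P γ` minimizes `h` over `C'` whenever `T γ = γ`.
* `T` has a fixed point. The function `h` is continuous and coercive, so it has a minimizer `x`
  on `C'`; separating the strict epigraph of `h` from `C' × (-∞, h x]` gives a subgradient `g`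
  of `h` at `x` with `-g` normal to `C'` at `x` (`exists_subgradient_normal`), and then `x - g`
  is fixed by `T`.
* Krasnosel'skii–Mann (`krasnoselskii_mann`): in a finite-dimensional space the relaxed iterates
  of a nonexpansive map with a fixed point converge to a fixed point.

Uniqueness of the minimizer comes from the strong convexity of `h`.
-/

open Filter Topology

section DouglasRachford

variable {E : Type*} [NormedAddCommGroup E] [InnerProductSpace ℝ E]

/-! ### Proximal points and reflections -/

/-- Variational inequality for a proximal point relative to a convex set `S`. -/
lemma prox_variational {S : Set E} {φ : E → ℝ} (hφ : ConvexOn ℝ S φ) {x u : E} (hx : x ∈ S)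
    (hmin : ∀ w ∈ S, φ x + (1/2 : ℝ) * ‖x - u‖^2 ≤ φ w + (1/2 : ℝ) * ‖w - u‖^2)
    {w : E} (hw : w ∈ S) : φ x + inner ℝ (u - x) (w - x) ≤ φ w := by
  -- Comparison of `x` with `(1 - t) x + t w`, divided by `t`.
  have key : ∀ t : ℝ, 0 < t → t ≤ 1 →
      0 ≤ φ w - φ x - inner ℝ (u - x) (w - x) + t / 2 * ‖w - x‖^2 := by
    intro t ht ht1
    have h1 := hmin _ (hφ.1 hx hw (by linarith : (0:ℝ) ≤ 1 - t) ht.le (by ring))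
    have h2 := hφ.2 hx hw (by linarith : (0:ℝ) ≤ 1 - t) ht.le (by ring)
    have h3 : (1 - t) • x + t • w - u = t • (w - x) - (u - x) := by module
    have h4 : ‖x - u‖ = ‖u - x‖ := norm_sub_rev _ _
    rw [h3, norm_sub_sq_real (t • (w - x)), norm_smul, inner_smul_left, h4, mul_pow,
      real_inner_comm] at h1
    simp only [Real.norm_eq_abs, sq_abs, conj_trivial, smul_eq_mul] at h1 h2
    have h5 : 0 ≤ t * (φ w - φ x - inner ℝ (u - x) (w - x) + t / 2 * ‖w - x‖^2) := by
      nlinarith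
    exact nonneg_of_mul_nonneg_right h5 ht
  by_contra hcon
  push Not at hcon
  set D := φ x + inner ℝ (u - x) (w - x) - φ w with hD
  have hDpos : 0 < D := by linarith
  set N := ‖w - x‖^2 with hN
  have hN0 : 0 ≤ N := by positivity
  -- Any `t` with `t * N < 2 * D` gives the contradiction.
  have ht := key (min 1 (D / (N + 1))) (by positivity) (min_le_left _ _)
  have h6 : min 1 (D / (N + 1)) * (N + 1) ≤ D := by
    calc _ ≤ D / (N + 1) * (N + 1) := by gcongr; exact min_le_right _ _
      _ = D := by field_simp
  have h7 : 0 < min 1 (D / (N + 1)) := by positivity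
  nlinarith

/-- If `(x, u - x)` and `(y, v - y)` are monotonically related, the reflections of `u` and `v`
through `x` and `y` are no further apart than `u` and `v`. -/
lemma norm_reflection_le {x y u v : E} (h : 0 ≤ inner ℝ (x - y) ((u - x) - (v - y))) :
    ‖(2 • x - u) - (2 • y - v)‖ ≤ ‖u - v‖ := by
  have h1 : (u - x) - (v - y) = (u - v) - (x - y) := by abel
  have h2 : (2 • x - u) - (2 • y - v) = (2:ℝ) • (x - y) - (u - v) := by module
  rw [h1, inner_sub_right, real_inner_self_eq_norm_sq] at h
  rw [h2]
  refine le_of_sq_le_sq ?_ (norm_nonneg _)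
  rw [norm_sub_sq_real, norm_smul, inner_smul_left, mul_pow]
  simp only [Real.norm_eq_abs, sq_abs, conj_trivial]
  linarith

/-- A map whose values satisfy the variational inequality of `prox_variational` has a
nonexpansive reflection. -/
lemma reflection_nonexpansive {S : Set E} {φ : E → ℝ} {R : E → E} (hS : ∀ u, R u ∈ S)
    (hvar : ∀ u, ∀ w ∈ S, φ (R u) + inner ℝ (u - R u) (w - R u) ≤ φ w) (u v : E) :
    ‖(2 • R u - u) - (2 • R v - v)‖ ≤ ‖u - v‖ := by
  apply norm_reflection_le
  have h1 := hvar u _ (hS v)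
  have h2 := hvar v _ (hS u)
  have h3 : inner ℝ (R u - R v) ((u - R u) - (v - R v)) =
      -(inner ℝ (u - R u) (R v - R u)) - inner ℝ (v - R v) (R u - R v) := by
    rw [real_inner_comm, inner_sub_left, ← inner_neg_right, neg_sub]
  rw [h3]
  linarith

/-! ### Optimality condition on a convex set -/

/-- Optimality condition for minimizing a continuous convex function `φ` over a convex set `C`:
some subgradient `g` of `φ` at a minimizer `x` is such that `-g` is normal to `C` at `x`. -/
lemma exists_subgradient_normal [CompleteSpace E] {C : Set E} (hC : Convex ℝ C) {φ : E → ℝ}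
    (hφ : ConvexOn ℝ Set.univ φ) (hcont : Continuous φ) {x : E} (hx : x ∈ C)
    (hmin : ∀ w ∈ C, φ x ≤ φ w) :
    ∃ g : E, (∀ w, φ x + inner ℝ g (w - x) ≤ φ w) ∧ ∀ w ∈ C, 0 ≤ inner ℝ g (w - x) := by
  have hAc : Convex ℝ {p : E × ℝ | p.1 ∈ Set.univ ∧ φ p.1 < p.2} := hφ.convex_strict_epigraph
  have hAo : IsOpen {p : E × ℝ | p.1 ∈ Set.univ ∧ φ p.1 < p.2} := by
    simp only [Set.mem_univ, true_and]
    exact isOpen_lt (hcont.comp continuous_fst) continuous_snd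
  have hdisj : Disjoint {p : E × ℝ | p.1 ∈ Set.univ ∧ φ p.1 < p.2} (C ×ˢ Set.Iic (φ x)) := by
    rw [Set.disjoint_left]
    rintro ⟨w, r⟩ ⟨-, h1⟩ ⟨h2, h3⟩
    have := hmin w h2
    simp only [Set.mem_Iic] at h1 h3
    linarith
  obtain ⟨f, c, hf1, hf2⟩ :=
    geometric_hahn_banach_open hAc hAo (hC.prod (convex_Iic (φ x))) hdisj
  set s := f (0, 1) with hs
  set l : StrongDual ℝ E := f.comp (ContinuousLinearMap.inl ℝ E ℝ) with hl
  have hf : ∀ w r, f (w, r) = l w + r * s := by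
    intro w r
    have : ((w, r) : E × ℝ) = (w, 0) + r • ((0 : E), (1 : ℝ)) := by simp
    rw [this, map_add, map_smul]
    simp [hl, hs]
  have hsep : ∀ w r, φ w < r → ∀ y ∈ C, l w + r * s < l y + φ x * s := by
    intro w r hr y hy
    rw [← hf, ← hf]
    exact (hf1 _ ⟨trivial, hr⟩).trans_le (hf2 _ ⟨hy, le_refl (φ x)⟩)
  have hsneg : s < 0 := by
    have := hsep x (φ x + 1) (by linarith) x hx
    linarith
  have hsep' : ∀ w, ∀ y ∈ C, l w + φ w * s ≤ l y + φ x * s := by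
    intro w y hy
    by_contra hcon
    push Not at hcon
    have hε : 0 < (l w + φ w * s - (l y + φ x * s)) / (-s) :=
      div_pos (by linarith) (by linarith)
    have h1 := hsep w _ (lt_add_of_pos_right (φ w) hε) y hy
    have h2 : (l w + φ w * s - (l y + φ x * s)) / (-s) * s =
        -(l w + φ w * s - (l y + φ x * s)) := by
      rw [div_neg, neg_mul, div_mul_cancel₀ _ hsneg.ne]
    rw [add_mul, h2] at h1
    linarith
  refine ⟨(InnerProductSpace.toDual ℝ E).symm ((-s)⁻¹ • l), fun w => ?_, fun w hw => ?_⟩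
  · have h1 := hsep' w x hx
    rw [InnerProductSpace.toDual_symm_apply]
    simp only [smul_apply, smul_eq_mul, map_sub]
    have h2 : (-s)⁻¹ * (l w - l x) ≤ φ w - φ x := by
      rw [inv_mul_le_iff₀ (by linarith)]
      linarith
    linarith
  · have h1 := hsep' x w hw
    rw [InnerProductSpace.toDual_symm_apply]
    simp only [smul_apply, smul_eq_mul, map_sub]
    have h2 : 0 ≤ l w - l x := by linarith
    have h3 : 0 ≤ -s := by linarith
    rw [← mul_sub]
    exact mul_nonneg (inv_nonneg.2 h3) h2

/-! ### Krasnosel'skii–Mann iteration -/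

/-- The identity behind both the Krasnosel'skii–Mann descent estimate and the strong convexity of
`½‖·‖²`. -/
lemma norm_sq_relax (a b : E) (t : ℝ) :
    ‖a + t • (b - a)‖^2 = (1 - t) * ‖a‖^2 + t * ‖b‖^2 - t * (1 - t) * ‖b - a‖^2 := by
  have h : ‖b‖^2 = ‖a‖^2 + 2 * inner ℝ a (b - a) + ‖b - a‖^2 := by
    rw [← norm_add_sq_real]; congr 2; abel
  rw [norm_add_sq_real, norm_smul, inner_smul_right, mul_pow, h]
  simp only [Real.norm_eq_abs, sq_abs]
  ring

/-- Krasnosel'skii–Mann iteration of a nonexpansive map with a fixed point. -/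
lemma krasnoselskii_mann [ProperSpace E] {T : E → E} (hT : ∀ u v, ‖T u - T v‖ ≤ ‖u - v‖)
    {z : E} (hz : T z = z) {ν : ℕ → ℝ} (hν : ∀ t, ν t ∈ Set.Ioo (0 : ℝ) 1)
    (hνdiv : Tendsto (fun N => ∑ t ∈ Finset.range N, ν t * (1 - ν t)) atTop atTop)
    {γ : ℕ → E} (hrec : ∀ t, γ (t + 1) = γ t + ν t • (T (γ t) - γ t)) :
    ∃ g, Tendsto γ atTop (𝓝 g) ∧ T g = g := by
  have hdesc : ∀ y, T y = y → ∀ t,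
      ‖γ (t + 1) - y‖^2 ≤ ‖γ t - y‖^2 - ν t * (1 - ν t) * ‖T (γ t) - γ t‖^2 := by
    intro y hy t
    have h1 : γ (t + 1) - y = (γ t - y) + ν t • ((T (γ t) - y) - (γ t - y)) := by
      rw [hrec]; module
    have h2 : ‖T (γ t) - y‖ ≤ ‖γ t - y‖ := by simpa [hy] using hT (γ t) y
    have h3 : ‖T (γ t) - y‖^2 ≤ ‖γ t - y‖^2 := by gcongr
    rw [h1, norm_sq_relax, sub_sub_sub_cancel_right]
    nlinarith [(hν t).1]
  have hanti : ∀ y, T y = y → Antitone fun t => ‖γ t - y‖ := by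
    intro y hy
    refine antitone_nat_of_succ_le fun t => ?_
    refine le_of_sq_le_sq ?_ (norm_nonneg _)
    have := hdesc y hy t
    have h0 : 0 ≤ ν t * (1 - ν t) * ‖T (γ t) - γ t‖^2 :=
      mul_nonneg (mul_nonneg (hν t).1.le (by linarith [(hν t).2])) (sq_nonneg _)
    linarith
  have hres : Antitone fun t => ‖T (γ t) - γ t‖ := by
    refine antitone_nat_of_succ_le fun t => ?_
    have h1 : T (γ (t + 1)) - γ (t + 1) =
        (T (γ (t + 1)) - T (γ t)) + (1 - ν t) • (T (γ t) - γ t) := by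
      nth_rewrite 2 [hrec]; module
    have h2 : ‖γ (t + 1) - γ t‖ = ν t * ‖T (γ t) - γ t‖ := by
      rw [hrec, add_sub_cancel_left, norm_smul, Real.norm_of_nonneg (hν t).1.le]
    calc ‖T (γ (t + 1)) - γ (t + 1)‖
        ≤ ‖T (γ (t + 1)) - T (γ t)‖ + ‖(1 - ν t) • (T (γ t) - γ t)‖ := by
          rw [h1]; exact norm_add_le _ _
      _ ≤ ν t * ‖T (γ t) - γ t‖ + (1 - ν t) * ‖T (γ t) - γ t‖ := by
          rw [norm_smul, Real.norm_of_nonneg (by linarith [(hν t).2] : 0 ≤ 1 - ν t), ← h2]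
          gcongr
          exact hT _ _
      _ = ‖T (γ t) - γ t‖ := by ring
  -- Summing the descent estimate bounds the residual at time `N`, which is the smallest so far.
  have hsum : ∀ N, (∑ t ∈ Finset.range N, ν t * (1 - ν t)) * ‖T (γ N) - γ N‖^2
      ≤ ‖γ 0 - z‖^2 := by
    intro N
    have h1 : ∀ M, ∑ t ∈ Finset.range M, ν t * (1 - ν t) * ‖T (γ t) - γ t‖^2
        ≤ ‖γ 0 - z‖^2 - ‖γ M - z‖^2 := by
      intro M
      induction M with
      | zero => simp
      | succ k ih => rw [Finset.sum_range_succ]; linarith [hdesc z hz k]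
    refine le_trans ?_ ((h1 N).trans (by linarith [sq_nonneg ‖γ N - z‖]))
    rw [Finset.sum_mul]
    refine Finset.sum_le_sum fun t ht => ?_
    refine mul_le_mul_of_nonneg_left ?_ (mul_nonneg (hν t).1.le (by linarith [(hν t).2]))
    have : ‖T (γ N) - γ N‖ ≤ ‖T (γ t) - γ t‖ := hres (Finset.mem_range.1 ht).le
    gcongr
  have hres0 : Tendsto (fun t => T (γ t) - γ t) atTop (𝓝 0) := by
    have h1 : Tendsto (fun N => ‖T (γ N) - γ N‖^2) atTop (𝓝 0) := by
      refine squeeze_zero' (Eventually.of_forall fun _ => sq_nonneg _) ?_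
        (hνdiv.const_div_atTop (‖γ 0 - z‖^2))
      filter_upwards [hνdiv.eventually_gt_atTop 0] with N hN
      rw [le_div_iff₀ hN, mul_comm]
      exact hsum N
    have h2 := h1.sqrt
    simp only [Real.sqrt_sq (norm_nonneg _), Real.sqrt_zero] at h2
    exact tendsto_zero_iff_norm_tendsto_zero.2 h2
  have hmem : ∀ t, γ t ∈ Metric.closedBall z ‖γ 0 - z‖ := fun t => by
    rw [mem_closedBall_iff_norm]
    exact hanti z hz (Nat.zero_le t)
  obtain ⟨g, -, σ, hσ, hg⟩ := (isCompact_closedBall z ‖γ 0 - z‖).tendsto_subseq hmem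
  have hTc : Continuous T := by
    refine (LipschitzWith.of_dist_le_mul (K := 1) fun u v => ?_).continuous
    simpa [dist_eq_norm] using hT u v
  have hfix : T g = g := by
    have h1 : Tendsto (fun n => T (γ (σ n)) - γ (σ n)) atTop (𝓝 (T g - g)) :=
      ((hTc.tendsto g).comp hg).sub hg
    exact sub_eq_zero.1 (tendsto_nhds_unique h1 (hres0.comp hσ.tendsto_atTop))
  refine ⟨g, ?_, hfix⟩
  -- The distances to the fixed point `g` are antitone and vanish along a subsequence.
  rw [tendsto_iff_norm_sub_tendsto_zero]
  rw [Metric.tendsto_atTop]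
  intro ε hε
  obtain ⟨n, hn⟩ := ((tendsto_iff_norm_sub_tendsto_zero.1 hg).eventually_lt_const hε).exists
  refine ⟨σ n, fun m hm => ?_⟩
  rw [dist_zero_right, norm_norm]
  exact (hanti g hfix hm).trans_lt hn

/-! ### Existence of a minimizer -/

/-- A function bounded below by a linear function plus `½‖· - α‖²` attains its minimum on a
nonempty closed set. -/
lemma exists_min_of_quadratic_growth [ProperSpace E] {C : Set E} (hne : C.Nonempty)
    (hcl : IsClosed C) {φ : E → ℝ} (hcont : Continuous φ) (α a : E) (c : ℝ)
    (hlow : ∀ w, c + inner ℝ a (w - α) + (1/2 : ℝ) * ‖w - α‖^2 ≤ φ w) :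
    ∃ x ∈ C, ∀ w ∈ C, φ x ≤ φ w := by
  obtain ⟨x₀, hx₀⟩ := hne
  refine (hcont.continuousOn (s := C)).exists_isMinOn' hcl hx₀ ?_
  refine Filter.Eventually.filter_mono inf_le_left ?_
  have htend : Tendsto (fun w : E => ‖w - α‖) (cocompact E) atTop := by
    simpa [dist_eq_norm] using tendsto_dist_right_cocompact_atTop α
  filter_upwards [htend.eventually_ge_atTop (2 * ‖a‖ + 2), htend.eventually_ge_atTop (φ x₀ - c)]
    with w h1 h2
  have h3 := hlow w
  have h4 : -(‖a‖ * ‖w - α‖) ≤ inner ℝ a (w - α) :=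
    (abs_le.1 (abs_real_inner_le_norm a (w - α))).1
  nlinarith [norm_nonneg (w - α)]

end DouglasRachford


/-! ### Douglas–Rachford iteration -/

/-- Douglas–Rachford iteration for computing `prox_{ι_{C'} + λΨ}(α)`: with `P` the metric
projection onto the nonempty closed convex set `C'`, `Q(u)` the unique minimizer of
`w ↦ λΨ(w) + ½‖w - α‖² + ½‖w - u‖²`, relaxation parameters `ν_t ∈ (0,1)` with
`Σ ν_t(1 - ν_t) = ∞`, the iterates `γ^{t+1} = γ^t + ν_t((2Q - I)((2P - I)γ^t) - γ^t)`
converge to some `γ`, and `P(γ)` is the unique minimizer over `C'` of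
`w ↦ λΨ(w) + ½‖w - α‖²`. -/
theorem stmt_10 (E : Type*) [NormedAddCommGroup E] [InnerProductSpace ℝ E]
    [FiniteDimensional ℝ E]
    (C' : Set E) (hne : C'.Nonempty) (hcl : IsClosed C') (hco : Convex ℝ C')
    (Ψ : E → ℝ) (hΨconv : ConvexOn ℝ Set.univ Ψ) (hΨcont : Continuous Ψ)
    (lam : ℝ) (hlam : 0 < lam) (α : E)
    (P : E → E)
    (hP : ∀ u : E, P u ∈ C' ∧ ∀ w ∈ C', ‖u - P u‖ ≤ ‖u - w‖)
    (Q : E → E)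
    (hQmin : ∀ u : E, ∀ w : E,
      lam * Ψ (Q u) + (1/2 : ℝ) * ‖Q u - α‖^2 + (1/2 : ℝ) * ‖Q u - u‖^2 ≤
      lam * Ψ w + (1/2 : ℝ) * ‖w - α‖^2 + (1/2 : ℝ) * ‖w - u‖^2)
    (hQuniq : ∀ u : E, ∀ w : E,
      (∀ v : E,
        lam * Ψ w + (1/2 : ℝ) * ‖w - α‖^2 + (1/2 : ℝ) * ‖w - u‖^2 ≤
        lam * Ψ v + (1/2 : ℝ) * ‖v - α‖^2 + (1/2 : ℝ) * ‖v - u‖^2) → w = Q u)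
    (ν : ℕ → ℝ) (hν : ∀ t, ν t ∈ Set.Ioo (0 : ℝ) 1)
    (hνdiv : Filter.Tendsto (fun N => ∑ t ∈ Finset.range N, ν t * (1 - ν t))
      Filter.atTop Filter.atTop)
    (γ : ℕ → E)
    (hrec : ∀ t : ℕ, γ (t+1) = γ t +
      ν t • ((2 • Q (2 • P (γ t) - γ t) - (2 • P (γ t) - γ t)) - γ t)) :
    ∃ glim : E, Filter.Tendsto γ Filter.atTop (nhds glim) ∧
      P glim ∈ C' ∧
      (∀ w ∈ C',
        lam * Ψ (P glim) + (1/2 : ℝ) * ‖P glim - α‖^2 ≤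
        lam * Ψ w + (1/2 : ℝ) * ‖w - α‖^2) ∧
      ∀ w ∈ C',
        (∀ v ∈ C',
          lam * Ψ w + (1/2 : ℝ) * ‖w - α‖^2 ≤ lam * Ψ v + (1/2 : ℝ) * ‖v - α‖^2) →
        w = P glim := by
  set h : E → ℝ := fun w => lam * Ψ w + (1/2 : ℝ) * ‖w - α‖^2 with hh
  have hstrong : ∀ x y : E, ∀ a b : ℝ, 0 ≤ a → 0 ≤ b → a + b = 1 →
      h (a • x + b • y) ≤ a * h x + b * h y - a * b / 2 * ‖y - x‖^2 := by
    intro x y a b ha hb hab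
    have h1 := hΨconv.2 (Set.mem_univ x) (Set.mem_univ y) ha hb hab
    obtain rfl : a = 1 - b := by linarith
    have h2 : (1 - b) • x + b • y - α = (x - α) + b • ((y - α) - (x - α)) := by module
    have h3 := norm_sq_relax (x - α) (y - α) b
    rw [← h2, sub_sub_sub_cancel_right] at h3
    simp only [smul_eq_mul] at h1
    simp only [hh]
    rw [h3]
    nlinarith
  have hconv : ConvexOn ℝ Set.univ h := by
    refine ⟨convex_univ, fun x _ y _ a b ha hb hab => ?_⟩
    have h1 := hstrong x y a b ha hb hab
    have h2 : 0 ≤ a * b / 2 * ‖y - x‖^2 := by positivity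
    simp only [smul_eq_mul]
    linarith
  have hcont : Continuous h := by
    simp only [hh]
    fun_prop
  have hQvar : ∀ u, ∀ w ∈ (Set.univ : Set E), h (Q u) + inner ℝ (u - Q u) (w - Q u) ≤ h w :=
    fun u w hw => prox_variational hconv (Set.mem_univ _) (fun w _ => hQmin u w) hw
  have hPvar : ∀ u, ∀ w ∈ C', (0 : ℝ) + inner ℝ (u - P u) (w - P u) ≤ 0 := by
    intro u w hw
    refine prox_variational (φ := fun _ => (0 : ℝ)) (convexOn_const 0 hco) (hP u).1
      (fun v hv => ?_) hw
    have h1 := (hP u).2 v hv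
    rw [norm_sub_rev u, norm_sub_rev u] at h1
    have h2 : ‖P u - u‖^2 ≤ ‖v - u‖^2 := by gcongr
    linarith
  have huniq : ∀ x ∈ C', ∀ y ∈ C', (∀ v ∈ C', h x ≤ h v) → (∀ v ∈ C', h y ≤ h v) → x = y := by
    intro x hx y hy hxm hym
    have h1 := hstrong x y (1/2) (1/2) (by norm_num) (by norm_num) (by norm_num)
    have h2 := hxm _ (hco hx hy (by norm_num : (0:ℝ) ≤ 1/2) (by norm_num : (0:ℝ) ≤ 1/2)
      (by norm_num))
    have h3 := hym x hx
    have h4 : ‖y - x‖^2 = 0 := le_antisymm (by linarith) (sq_nonneg _)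
    exact (sub_eq_zero.1 (norm_eq_zero.1 (pow_eq_zero_iff two_ne_zero |>.1 h4))).symm
  obtain ⟨x, hxC, hxmin⟩ : ∃ x ∈ C', ∀ w ∈ C', h x ≤ h w := by
    -- `Q α` is a proximal point of `(lam / 2) Ψ` at `α`, which gives an affine minorant of `Ψ`.
    have hmin : ∀ w, lam * Ψ (Q α) + 2 * inner ℝ (α - Q α) (w - Q α) ≤ lam * Ψ w := by
      intro w
      have := prox_variational (φ := fun w => lam / 2 * Ψ w) (S := Set.univ) (x := Q α) (u := α)
        (hΨconv.smul (by positivity)) (Set.mem_univ _)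
        (fun v _ => by have := hQmin α v; linarith) (Set.mem_univ w)
      linarith
    refine exists_min_of_quadratic_growth hne hcl hcont α ((2:ℝ) • (α - Q α))
      (lam * Ψ (Q α) + 2 * ‖α - Q α‖^2) fun w => ?_
    have h1 := hmin w
    have h2 : w - Q α = (w - α) + (α - Q α) := by abel
    rw [h2, inner_add_right, real_inner_self_eq_norm_sq] at h1
    simp only [hh, inner_smul_left, conj_trivial]
    linarith
  obtain ⟨g, hg1, hg2⟩ := exists_subgradient_normal hco hconv hcont hxC hxmin
  have hPx : P (x - g) = x := by
    have h1 := hPvar (x - g) x hxC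
    have h2 := hg2 _ (hP (x - g)).1
    have h3 : x - g - P (x - g) = (x - P (x - g)) - g := by abel
    rw [h3, inner_sub_left, real_inner_self_eq_norm_sq] at h1
    rw [← neg_sub, inner_neg_right] at h2
    have h4 : ‖x - P (x - g)‖^2 = 0 := le_antisymm (by linarith) (sq_nonneg _)
    exact (sub_eq_zero.1 (norm_eq_zero.1 (pow_eq_zero_iff two_ne_zero |>.1 h4))).symm
  have hQx : Q (x + g) = x := by
    refine (hQuniq (x + g) x fun v => ?_).symm
    have h1 := hg1 v
    have h2 : v - (x + g) = (v - x) - g := by abel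
    have h3 : x - (x + g) = -g := by abel
    rw [h2, h3, norm_neg, norm_sub_sq_real (v - x), real_inner_comm]
    simp only [hh] at h1
    nlinarith [sq_nonneg ‖v - x‖]
  set T : E → E := fun u => 2 • Q (2 • P u - u) - (2 • P u - u) with hTdef
  have hT : ∀ u v, ‖T u - T v‖ ≤ ‖u - v‖ := fun u v =>
    (reflection_nonexpansive (fun u => Set.mem_univ (Q u)) hQvar _ _).trans
      (reflection_nonexpansive (φ := fun _ => (0 : ℝ)) (fun u => (hP u).1) hPvar u v)
  have hz : T (x - g) = x - g := by
    have h1 : 2 • x - (x - g) = x + g := by rw [two_smul]; abel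
    simp only [hTdef]
    rw [hPx, h1, hQx, two_smul]
    abel
  obtain ⟨y, hy, hyfix⟩ := krasnoselskii_mann hT hz hν hνdiv hrec
  have hQP : Q (2 • P y - y) = P y := by
    have h1 : 2 • Q (2 • P y - y) - (2 • P y - y) = y := hyfix
    have h2 : (2:ℝ) • Q (2 • P y - y) = (2:ℝ) • P y := by
      rw [sub_eq_iff_eq_add, add_sub_cancel] at h1
      simpa only [two_smul] using h1
    exact smul_right_injective E (two_ne_zero (α := ℝ)) h2
  have hPmin : ∀ w ∈ C', h (P y) ≤ h w := by
    intro w hw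
    have h1 := hQvar (2 • P y - y) w (Set.mem_univ w)
    have h2 := hPvar y w hw
    have h3 : 2 • P y - y - P y = -(y - P y) := by rw [two_smul]; abel
    rw [hQP, h3, inner_neg_left] at h1
    linarith
  exact ⟨y, hy, (hP y).1, hPmin, fun w hw hwmin => huniq w hw _ (hP y).1 hwmin hPmin⟩
end

section
/- Let E be a finite-dimensional real inner product space, let f₁ : E → ℝ be convex and differentiable with κ-Lipschitz gradient for some κ > 0, let f₂ : E → ℝ ∪ {+∞} be proper, convex, and lower semicontinuous, and suppose f₁ + f₂ has at least one minimizer. Let (μ_t)_{t≥0} be a sequence in (0, +∞) with 0 < inf_t μ_t ≤ sup_t μ_t < 2/κ. Fix α₀ ∈ E and define α_{t+1} = prox_{μ_t f₂}(α_t − μ_t ∇f₁(α_t)), where prox_{μ f₂}(x) is the unique minimizer of y ↦ μ f₂(y) + ½‖x − y‖². Then the sequence (α_t) converges to a minimizer of f₁ + f₂. -/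
/-!
Convergence of forward-backward splitting by Fejér monotonicity.

Minimality over the domain of `f₂` is turned into a subgradient inequality
(`le_of_min_add`), both for the proximal step and for a minimizer `m` of `f₁ + f₂`. Adding the two
inequalities gives `‖p - m‖² ≤ ⟪(x - m) - μ D, p - m⟫` for a step `x ↦ p`, where
`D = ∇f₁ x - ∇f₁ m`. Cocoercivity of `∇f₁` (Baillon–Haddad, `cocoercive`) then yields
`‖x - p - μ D‖² + μ (2/κ - μ) ‖D‖² ≤ ‖x - m‖² - ‖p - m‖²`.
So the distances to every minimizer decrease, and `α t - α (t+1) → 0` because `μ (2/κ - μ)` stays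
bounded away from `0`. The sequence is bounded, hence has a cluster point; passing to the limit in
the proximal subgradient inequality, with lower semicontinuity of `f₂`, shows that this cluster
point is itself a minimizer. The distance to it decreases and vanishes along a subsequence, so it
tends to `0`.
-/

open Filter Topology Set

/-! ### Subgradients, cocoercivity and the one-step estimate -/

section Aux

variable {E : Type*} [NormedAddCommGroup E] [InnerProductSpace ℝ E]

/-- First-order condition at a minimizer `p` of `φ + F` over `S`, where `F` is convex and `φ` has
a quadratic upper model at `p` with slope `g`: `-g` is a subgradient of `F` at `p`. -/
lemma le_of_min_add {S : Set E} {F φ : E → ℝ} (hF : ConvexOn ℝ S F) {p g : E} (hp : p ∈ S)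
    {C : ℝ} (hφ : ∀ z, φ z ≤ φ p + inner ℝ g (z - p) + C * ‖z - p‖ ^ 2)
    (hmin : ∀ z ∈ S, φ p + F p ≤ φ z + F z) {y : E} (hy : y ∈ S) :
    F p ≤ F y + inner ℝ g (y - p) := by
  have key : ∀ s : ℝ, 0 < s → s ≤ 1 →
      F p ≤ F y + inner ℝ g (y - p) + s * (C * ‖y - p‖ ^ 2) := by
    intro s hs hs1
    have hc := hF.2 hp hy (by linarith : (0 : ℝ) ≤ 1 - s) hs.le (by ring)
    have hm := hF.1 hp hy (by linarith : (0 : ℝ) ≤ 1 - s) hs.le (by ring)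
    have e : (1 - s) • p + s • y - p = s • (y - p) := by module
    have h1 := hmin _ hm
    have h2 := hφ ((1 - s) • p + s • y)
    rw [e, inner_smul_right, norm_smul, mul_pow, Real.norm_eq_abs, sq_abs] at h2
    simp only [smul_eq_mul] at hc
    have h3 : s * F p ≤ s * (F y + inner ℝ g (y - p) + s * (C * ‖y - p‖ ^ 2)) := by
      nlinarith
    exact le_of_mul_le_mul_left h3 hs
  have ht : Tendsto (fun s : ℝ => F y + inner ℝ g (y - p) + s * (C * ‖y - p‖ ^ 2)) (𝓝[>] 0)
      (𝓝 (F y + inner ℝ g (y - p) + 0 * (C * ‖y - p‖ ^ 2))) := by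
    refine Tendsto.mono_left (Continuous.tendsto ?_ 0) nhdsWithin_le_nhds
    fun_prop
  rw [zero_mul, add_zero] at ht
  refine ge_of_tendsto ht ?_
  filter_upwards [Ioc_mem_nhdsGT (zero_lt_one' ℝ)] with s hs using key s hs.1 hs.2

/-- The Fejér estimate for one step, in terms of `w = x - m`, `v = p - m` and
`D = ∇f₁ x - ∇f₁ m`. -/
lemma fejer_step {w v D : E} {κ μ : ℝ} (hμ : 0 ≤ μ)
    (h : ‖v‖ ^ 2 ≤ inner ℝ (w - μ • D) v) (hc : 1 / κ * ‖D‖ ^ 2 ≤ inner ℝ D w) :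
    ‖w - μ • D - v‖ ^ 2 + μ * (2 / κ - μ) * ‖D‖ ^ 2 ≤ ‖w‖ ^ 2 - ‖v‖ ^ 2 := by
  have h1 := norm_sub_sq_real (w - μ • D) v
  have h2 := norm_sub_sq_real w (μ • D)
  rw [inner_smul_right, norm_smul, Real.norm_eq_abs, mul_pow, sq_abs, real_inner_comm] at h2
  have h3 := mul_le_mul_of_nonneg_left hc hμ
  have h4 : μ * (2 / κ - μ) * ‖D‖ ^ 2 = 2 * (μ * (1 / κ * ‖D‖ ^ 2)) - μ ^ 2 * ‖D‖ ^ 2 := by ring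
  linarith

variable [CompleteSpace E]

lemma hasDerivAt_line {f : E → ℝ} {f' : E → E} (hg : ∀ x, HasGradientAt f (f' x) x)
    (x d : E) (t : ℝ) :
    HasDerivAt (fun t : ℝ => f (x + t • d)) (inner ℝ (f' (x + t • d)) d) t := by
  have h1 : HasDerivAt (fun t : ℝ => x + t • d) d t := by
    simpa using ((hasDerivAt_id t).smul_const d).const_add x
  have h2 := (hg (x + t • d)).hasFDerivAt.comp_hasDerivAt t h1
  exact h2.congr_deriv (by simp)

lemma gradient_ineq {f : E → ℝ} {f' : E → E} (hf : ConvexOn ℝ univ f)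
    (hg : ∀ x, HasGradientAt f (f' x) x) (x y : E) :
    f x + inner ℝ (f' x) (y - x) ≤ f y := by
  have hd := hasDerivAt_line hg x (y - x) 0
  have hc : ConvexOn ℝ univ (fun t : ℝ => f (x + t • (y - x))) := by
    have := hf.comp_affineMap (AffineMap.lineMap x y : ℝ →ᵃ[ℝ] E)
    rw [preimage_univ] at this
    have e : (fun t : ℝ => f (x + t • (y - x))) = f ∘ (AffineMap.lineMap x y : ℝ →ᵃ[ℝ] E) := by
      funext t
      simp [AffineMap.lineMap_apply, add_comm]
    rwa [e]
  have := hc.le_slope_of_hasDerivAt (mem_univ 0) (mem_univ 1) zero_lt_one hd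
  simp only [slope_def_field, zero_smul, one_smul, add_zero, sub_zero, div_one,
    add_sub_cancel] at this
  linarith

/-- The descent lemma. -/
lemma descent {f : E → ℝ} {f' : E → E} (hg : ∀ x, HasGradientAt f (f' x) x) {κ : ℝ}
    (hl : ∀ x y, ‖f' x - f' y‖ ≤ κ * ‖x - y‖) (x y : E) :
    f y ≤ f x + inner ℝ (f' x) (y - x) + κ / 2 * ‖y - x‖ ^ 2 := by
  set d := y - x with hd
  -- the gap between `f` and its quadratic model is nonincreasing along the segment
  let h : ℝ → ℝ := fun t => f (x + t • d) - t * inner ℝ (f' x) d - κ / 2 * ‖d‖ ^ 2 * t ^ 2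
  have hder : ∀ t, HasDerivAt h
      (inner ℝ (f' (x + t • d)) d - inner ℝ (f' x) d - κ / 2 * ‖d‖ ^ 2 * (2 * t)) t := by
    intro t
    have := ((hasDerivAt_line hg x d t).sub ((hasDerivAt_id t).mul_const (inner ℝ (f' x) d))).sub
      ((hasDerivAt_pow 2 t).const_mul (κ / 2 * ‖d‖ ^ 2))
    exact this.congr_deriv (by simp)
  have hanti : AntitoneOn h (Icc 0 1) := by
    refine antitoneOn_of_deriv_nonpos (convex_Icc 0 1)
      (fun t _ => (hder t).continuousAt.continuousWithinAt)
      (fun t _ => (hder t).differentiableAt.differentiableWithinAt) ?_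
    intro t ht
    rw [interior_Icc] at ht
    rw [(hder t).deriv, ← inner_sub_left]
    have h1 := real_inner_le_norm (f' (x + t • d) - f' x) d
    have h2 := hl (x + t • d) x
    rw [add_sub_cancel_left, norm_smul, Real.norm_eq_abs, abs_of_pos ht.1] at h2
    have h3 := mul_le_mul_of_nonneg_right h2 (norm_nonneg d)
    nlinarith
  have := hanti (left_mem_Icc.2 zero_le_one) (right_mem_Icc.2 zero_le_one) zero_le_one
  simp only [h, one_smul, zero_smul, add_zero] at this
  have e : x + d = y := by simp [hd]
  rw [e] at this
  linarith

/-- Baillon–Haddad: a `κ`-Lipschitz gradient of a convex function is `1/κ`-cocoercive. -/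
lemma cocoercive {f : E → ℝ} {f' : E → E} (hf : ConvexOn ℝ univ f)
    (hg : ∀ x, HasGradientAt f (f' x) x) {κ : ℝ} (hκ : 0 < κ)
    (hl : ∀ x y, ‖f' x - f' y‖ ≤ κ * ‖x - y‖) (x y : E) :
    1 / κ * ‖f' x - f' y‖ ^ 2 ≤ inner ℝ (f' x - f' y) (x - y) := by
  have key : ∀ x y, f x + inner ℝ (f' x) (y - x) + 1 / (2 * κ) * ‖f' y - f' x‖ ^ 2 ≤ f y := by
    intro x y
    -- compare the affine minorant at `x` with the quadratic majorant at `y`, at the minimizer of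
    -- their difference
    have h1 := gradient_ineq hf hg x (y - (1 / κ) • (f' y - f' x))
    have h2 := descent hg hl y (y - (1 / κ) • (f' y - f' x))
    have e1 : y - (1 / κ) • (f' y - f' x) - y = -((1 / κ) • (f' y - f' x)) := by abel
    have e2 : y - (1 / κ) • (f' y - f' x) - x = (y - x) - (1 / κ) • (f' y - f' x) := by abel
    rw [e1, norm_neg, inner_neg_right, inner_smul_right, norm_smul, Real.norm_eq_abs, mul_pow,
      sq_abs] at h2
    rw [e2, inner_sub_right, inner_smul_right] at h1
    have h3 : inner ℝ (f' y) (f' y - f' x) - inner ℝ (f' x) (f' y - f' x)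
        = ‖f' y - f' x‖ ^ 2 := by
      rw [← inner_sub_left, real_inner_self_eq_norm_sq]
    have h4 : κ / 2 * ((1 / κ) ^ 2 * ‖f' y - f' x‖ ^ 2)
        = 1 / κ * ‖f' y - f' x‖ ^ 2 - 1 / (2 * κ) * ‖f' y - f' x‖ ^ 2 := by
      field_simp; ring
    have h5 : 1 / κ * inner ℝ (f' y) (f' y - f' x) - 1 / κ * inner ℝ (f' x) (f' y - f' x)
        = 1 / κ * ‖f' y - f' x‖ ^ 2 := by rw [← h3]; ring
    linarith
  have h1 := key x y
  have h2 := key y x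
  rw [norm_sub_rev] at h1
  have h3 : 1 / (2 * κ) * ‖f' x - f' y‖ ^ 2 + 1 / (2 * κ) * ‖f' x - f' y‖ ^ 2
      = 1 / κ * ‖f' x - f' y‖ ^ 2 := by field_simp; ring
  simp only [inner_sub_left, inner_sub_right] at *
  linarith

end Aux

/-! ### Convergence of the iterates -/

/-- Forward-backward splitting (proximal iteration): `f₁` convex differentiable with
`κ`-Lipschitz gradient, `f₂` proper convex lsc (EReal-valued, never `⊥`), `f₁ + f₂` has a
minimizer, step sizes `0 < a ≤ μ_t ≤ b < 2/κ`, and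
`α_{t+1} = prox_{μ_t f₂}(α_t - μ_t ∇f₁(α_t))` (encoded by the minimizing property).
Then the iterates converge to a minimizer of `f₁ + f₂`. -/
theorem stmt_11 (E : Type*) [NormedAddCommGroup E] [InnerProductSpace ℝ E]
    [FiniteDimensional ℝ E]
    (f₁ : E → ℝ) (hconv : ConvexOn ℝ Set.univ f₁)
    (f₁' : E → E) (hgrad : ∀ x : E, HasGradientAt f₁ (f₁' x) x)
    (κ : ℝ) (hκ : 0 < κ) (hlip : ∀ x y : E, ‖f₁' x - f₁' y‖ ≤ κ * ‖x - y‖)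
    (f₂ : E → EReal) (hproper : ∃ y, f₂ y ≠ ⊤) (hnotbot : ∀ y, f₂ y ≠ ⊥)
    (hconvex₂ : ∀ x y : E, ∀ t : ℝ, 0 ≤ t → t ≤ 1 →
      f₂ (t • x + (1 - t) • y) ≤ ((t : ℝ) : EReal) * f₂ x + (((1 - t : ℝ)) : EReal) * f₂ y)
    (hlsc : LowerSemicontinuous f₂)
    (hmin : ∃ m : E, ∀ y : E, ((f₁ m : ℝ) : EReal) + f₂ m ≤ ((f₁ y : ℝ) : EReal) + f₂ y)
    (μ : ℕ → ℝ) (a b : ℝ) (ha : 0 < a) (hb : b < 2/κ) (hμ : ∀ t, a ≤ μ t ∧ μ t ≤ b)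
    (α : ℕ → E)
    (hrec : ∀ t : ℕ, ∀ y : E,
      ((μ t : ℝ) : EReal) * f₂ (α (t+1)) +
          (((1/2 : ℝ) * ‖(α t - μ t • f₁' (α t)) - α (t+1)‖^2 : ℝ) : EReal) ≤
      ((μ t : ℝ) : EReal) * f₂ y +
          (((1/2 : ℝ) * ‖(α t - μ t • f₁' (α t)) - y‖^2 : ℝ) : EReal)) :
    ∃ αstar : E, Filter.Tendsto α Filter.atTop (nhds αstar) ∧
      ∀ y : E, ((f₁ αstar : ℝ) : EReal) + f₂ αstar ≤ ((f₁ y : ℝ) : EReal) + f₂ y := by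
  set S : Set E := {y | f₂ y ≠ ⊤} with hS
  set F : E → ℝ := fun y => (f₂ y).toReal with hFdef
  have hcoe : ∀ y ∈ S, f₂ y = ((F y : ℝ) : EReal) := fun y hy =>
    (EReal.coe_toReal hy (hnotbot y)).symm
  have hF : ConvexOn ℝ S F := by
    have key : ∀ x ∈ S, ∀ y ∈ S, ∀ s t : ℝ, 0 ≤ s → 0 ≤ t → s + t = 1 →
        f₂ (s • x + t • y) ≤ ((s * F x + t * F y : ℝ) : EReal) := by
      intro x hx y hy s t hs ht hst
      have h := hconvex₂ x y s hs (by linarith)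
      rw [hcoe x hx, hcoe y hy, (by linarith : 1 - s = t)] at h
      exact_mod_cast h
    have hconvS : Convex ℝ S := by
      intro x hx y hy s t hs ht hst
      exact ne_top_of_le_ne_top (EReal.coe_ne_top _) (key x hx y hy s t hs ht hst)
    refine ⟨hconvS, ?_⟩
    intro x hx y hy s t hs ht hst
    have h := key x hx y hy s t hs ht hst
    rw [hcoe _ (hconvS hx hy hs ht hst)] at h
    exact_mod_cast h
  obtain ⟨y₀, hy₀⟩ := hproper
  have hμpos : ∀ t, 0 < μ t := fun t => ha.trans_le (hμ t).1
  have hpS : ∀ t, α (t + 1) ∈ S := by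
    intro t htop
    have h := hrec t y₀
    rw [htop, hcoe y₀ hy₀, EReal.coe_mul_top_of_pos (hμpos t), EReal.top_add_coe] at h
    exact absurd h (not_le.2 (by exact_mod_cast EReal.coe_lt_top _))
  have hprox : ∀ t, ∀ y ∈ S, F (α (t + 1)) ≤
      F y + inner ℝ ((1 / μ t) • (α (t + 1) - (α t - μ t • f₁' (α t)))) (y - α (t + 1)) := by
    intro t y hy
    set u := α t - μ t • f₁' (α t) with hu
    have hm0 := hμpos t
    refine le_of_min_add (φ := fun z => 1 / μ t * (1 / 2 * ‖u - z‖ ^ 2)) (C := 1 / μ t * (1 / 2))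
      hF (hpS t) ?_ ?_ hy
    · intro z
      have e : u - z = (u - α (t + 1)) - (z - α (t + 1)) := by abel
      have h1 := norm_sub_sq_real (u - α (t + 1)) (z - α (t + 1))
      rw [← e] at h1
      have h2 : inner ℝ (α (t + 1) - u) (z - α (t + 1))
          = - inner ℝ (u - α (t + 1)) (z - α (t + 1)) := by
        rw [← inner_neg_left, neg_sub]
      rw [real_inner_smul_left, h2, h1]
      apply le_of_eq
      ring
    · intro z hz
      have h := hrec t z
      rw [hcoe _ (hpS t), hcoe z hz] at h
      have h' : μ t * F (α (t + 1)) + 1 / 2 * ‖u - α (t + 1)‖ ^ 2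
          ≤ μ t * F z + 1 / 2 * ‖u - z‖ ^ 2 := by exact_mod_cast h
      have h3 := mul_le_mul_of_nonneg_left h' (one_div_pos.2 hm0).le
      rw [mul_add, mul_add, ← mul_assoc, ← mul_assoc _ (μ t) (F z),
        one_div_mul_cancel hm0.ne'] at h3
      linarith
  set c := a * (2 / κ - b) with hc
  have hcpos : 0 < c := mul_pos ha (by linarith)
  have fejer : ∀ m : E, (∀ y : E, ((f₁ m : ℝ) : EReal) + f₂ m ≤ ((f₁ y : ℝ) : EReal) + f₂ y) →
      ∀ t, ‖α t - α (t + 1) - μ t • (f₁' (α t) - f₁' m)‖ ^ 2 + c * ‖f₁' (α t) - f₁' m‖ ^ 2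
        ≤ ‖α t - m‖ ^ 2 - ‖α (t + 1) - m‖ ^ 2 := by
    intro m hm t
    have hmS : m ∈ S := by
      intro htop
      have h := hm y₀
      rw [htop, hcoe y₀ hy₀, EReal.coe_add_top] at h
      exact absurd h (not_le.2 (by exact_mod_cast EReal.coe_lt_top _))
    have h1 := hprox t m hmS
    have h2 : F m ≤ F (α (t + 1)) + inner ℝ (f₁' m) (α (t + 1) - m) := by
      refine le_of_min_add (φ := f₁) (C := κ / 2) hF hmS (fun z => descent hgrad hlip m z) ?_
        (hpS t)
      intro z hz
      have h := hm z
      rw [hcoe m hmS, hcoe z hz] at h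
      exact_mod_cast h
    have hm0 := hμpos t
    have h3 : 0 ≤ inner ℝ (μ t • f₁' m + (α t - μ t • f₁' (α t)) - α (t + 1))
        (α (t + 1) - m) := by
      have h4 : 0 ≤ μ t * (inner ℝ ((1 / μ t) • (α (t + 1) - (α t - μ t • f₁' (α t))))
          (m - α (t + 1)) + inner ℝ (f₁' m) (α (t + 1) - m)) :=
        mul_nonneg hm0.le (by linarith)
      refine h4.trans_eq ?_
      rw [mul_add, ← real_inner_smul_left, ← real_inner_smul_left, smul_smul,
        mul_one_div_cancel hm0.ne', one_smul, ← neg_sub (α (t + 1)) m, inner_neg_right,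
        ← inner_neg_left, ← inner_add_left]
      congr 1
      abel
    have h5 : ‖α (t + 1) - m‖ ^ 2 ≤
        inner ℝ ((α t - m) - μ t • (f₁' (α t) - f₁' m)) (α (t + 1) - m) := by
      rw [← real_inner_self_eq_norm_sq, ← sub_nonneg, ← inner_sub_left]
      refine h3.trans_eq ?_
      congr 1
      module
    have h6 := fejer_step hm0.le h5 (cocoercive hconv hgrad hκ hlip (α t) m)
    have h7 : c ≤ μ t * (2 / κ - μ t) :=
      mul_le_mul (hμ t).1 (by linarith [(hμ t).2]) (by linarith) hm0.le
    have h8 := mul_le_mul_of_nonneg_right h7 (sq_nonneg ‖f₁' (α t) - f₁' m‖)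
    have e : α t - m - μ t • (f₁' (α t) - f₁' m) - (α (t + 1) - m)
        = α t - α (t + 1) - μ t • (f₁' (α t) - f₁' m) := by abel
    rw [e] at h6
    linarith
  have hanti : ∀ m : E,
      (∀ y : E, ((f₁ m : ℝ) : EReal) + f₂ m ≤ ((f₁ y : ℝ) : EReal) + f₂ y) →
      Antitone (fun t => ‖α t - m‖ ^ 2) := by
    intro m hm
    refine antitone_nat_of_succ_le fun t => ?_
    have := fejer m hm t
    have h1 := mul_nonneg hcpos.le (sq_nonneg ‖f₁' (α t) - f₁' m‖)
    have h2 := sq_nonneg ‖α t - α (t + 1) - μ t • (f₁' (α t) - f₁' m)‖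
    linarith
  obtain ⟨m, hm⟩ := hmin
  -- squared distances to `m` converge, so their decrements vanish
  have hdec : Tendsto (fun t => ‖α t - m‖ ^ 2 - ‖α (t + 1) - m‖ ^ 2) atTop (𝓝 0) := by
    have h := tendsto_atTop_ciInf (hanti m hm) ⟨0, by rintro _ ⟨t, rfl⟩; positivity⟩
    simpa using h.sub (h.comp (tendsto_add_atTop_nat 1))
  have hstep : Tendsto (fun t => α t - α (t + 1)) atTop (𝓝 0) := by
    have hD2 : Tendsto (fun t => ‖f₁' (α t) - f₁' m‖ ^ 2) atTop (𝓝 0) := by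
      have h := hdec.const_mul (1 / c)
      rw [mul_zero] at h
      refine squeeze_zero (fun t => sq_nonneg _) (fun t => ?_) h
      have h1 := fejer m hm t
      have h2 := sq_nonneg ‖α t - α (t + 1) - μ t • (f₁' (α t) - f₁' m)‖
      rw [one_div, ← div_eq_inv_mul, le_div_iff₀ hcpos]
      linarith
    have hR2 : Tendsto (fun t => ‖α t - α (t + 1) - μ t • (f₁' (α t) - f₁' m)‖ ^ 2)
        atTop (𝓝 0) := by
      refine squeeze_zero (fun t => sq_nonneg _) (fun t => ?_) hdec
      have h1 := fejer m hm t
      have h2 := mul_nonneg hcpos.le (sq_nonneg ‖f₁' (α t) - f₁' m‖)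
      linarith
    have hD : Tendsto (fun t => ‖f₁' (α t) - f₁' m‖) atTop (𝓝 0) := by
      simpa using hD2.sqrt
    have hR : Tendsto (fun t => ‖α t - α (t + 1) - μ t • (f₁' (α t) - f₁' m)‖)
        atTop (𝓝 0) := by
      simpa using hR2.sqrt
    have h := hR.add (hD.const_mul b)
    rw [mul_zero, add_zero] at h
    refine squeeze_zero_norm (fun t => ?_) h
    have h1 := norm_add_le (α t - α (t + 1) - μ t • (f₁' (α t) - f₁' m))
      (μ t • (f₁' (α t) - f₁' m))
    rw [sub_add_cancel, norm_smul, Real.norm_eq_abs, abs_of_pos (hμpos t)] at h1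
    have h2 := mul_le_mul_of_nonneg_right (hμ t).2 (norm_nonneg (f₁' (α t) - f₁' m))
    linarith
  have hball : ∀ t, α t ∈ Metric.closedBall m ‖α 0 - m‖ := by
    intro t
    rw [mem_closedBall_iff_norm]
    exact (sq_le_sq₀ (norm_nonneg _) (norm_nonneg _)).1 (hanti m hm (Nat.zero_le t))
  obtain ⟨x, -, φ, hφ, hx⟩ := (isCompact_closedBall m ‖α 0 - m‖).tendsto_subseq hball
  have hf₁'c : Continuous f₁' :=
    (LipschitzWith.of_dist_le_mul (K := ⟨κ, hκ.le⟩) fun x y => by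
      rw [dist_eq_norm, dist_eq_norm]
      exact hlip x y).continuous
  have hstepφ : Tendsto (fun n => α (φ n) - α (φ n + 1)) atTop (𝓝 0) :=
    hstep.comp hφ.tendsto_atTop
  have hx1 : Tendsto (fun n => α (φ n + 1)) atTop (𝓝 x) := by
    simpa using hx.sub hstepφ
  have hxmin : ∀ y : E, ((f₁ x : ℝ) : EReal) + f₂ x ≤ ((f₁ y : ℝ) : EReal) + f₂ y := by
    intro y
    by_cases hy : y ∈ S
    swap
    · rw [show f₂ y = ⊤ from not_not.1 hy, EReal.coe_add_top]
      exact le_top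
    -- `1 / μ` need not converge but is bounded by `1 / a`
    have hquot : Tendsto (fun n => (1 / μ (φ n)) • (α (φ n) - α (φ n + 1))) atTop (𝓝 0) := by
      have h := hstepφ.norm.const_mul (1 / a)
      rw [norm_zero, mul_zero] at h
      refine squeeze_zero_norm (fun n => ?_) h
      rw [norm_smul, Real.norm_eq_abs, abs_of_pos (one_div_pos.2 (hμpos _))]
      exact mul_le_mul_of_nonneg_right (one_div_le_one_div_of_le ha (hμ _).1) (norm_nonneg _)
    have hlim : Tendsto (fun n => F y + inner ℝ
        (f₁' (α (φ n)) - (1 / μ (φ n)) • (α (φ n) - α (φ n + 1))) (y - α (φ n + 1)))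
        atTop (𝓝 (F y + inner ℝ (f₁' x - 0) (y - x))) :=
      ((((hf₁'c.tendsto x).comp hx).sub hquot).inner (hx1.const_sub y)).const_add _
    rw [sub_zero] at hlim
    have hle : ∀ n, F (α (φ n + 1)) ≤ F y + inner ℝ
        (f₁' (α (φ n)) - (1 / μ (φ n)) • (α (φ n) - α (φ n + 1))) (y - α (φ n + 1)) := by
      intro n
      refine (hprox (φ n) y hy).trans_eq ?_
      congr 2
      have e : (1 / μ (φ n)) • (μ (φ n) • f₁' (α (φ n))) = f₁' (α (φ n)) := by
        rw [smul_smul, one_div_mul_cancel (hμpos _).ne', one_smul]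
      nth_rewrite 2 [← e]
      module
    have hf₂x : f₂ x ≤ ((F y + inner ℝ (f₁' x) (y - x) : ℝ) : EReal) := by
      refine le_of_forall_lt fun d hd => ?_
      obtain ⟨d', hdd', hd'⟩ := exists_between hd
      refine hdd'.trans_le ?_
      refine ge_of_tendsto ((continuous_coe_real_ereal.tendsto _).comp hlim) ?_
      filter_upwards [hx1.eventually (hlsc x d' hd')] with n hn
      refine hn.le.trans ?_
      rw [hcoe _ (hpS _)]
      exact EReal.coe_le_coe_iff.2 (hle n)
    have hxS : x ∈ S := ne_top_of_le_ne_top (EReal.coe_ne_top _) hf₂x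
    rw [hcoe x hxS] at hf₂x ⊢
    rw [hcoe y hy]
    have h1 := EReal.coe_le_coe_iff.1 hf₂x
    have h2 := gradient_ineq hconv hgrad x y
    have h3 : f₁ x + F x ≤ f₁ y + F y := by linarith
    exact_mod_cast h3
  refine ⟨x, ?_, hxmin⟩
  have hsub : Tendsto (fun n => ‖α (φ n) - x‖ ^ 2) atTop (𝓝 0) := by
    simpa using ((hx.sub_const x).norm.pow 2)
  have hall : Tendsto (fun t => ‖α t - x‖ ^ 2) atTop (𝓝 0) := by
    have h := tendsto_atTop_ciInf (hanti x hxmin) ⟨0, by rintro _ ⟨t, rfl⟩; positivity⟩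
    rwa [tendsto_nhds_unique (h.comp hφ.tendsto_atTop) hsub] at h
  rw [tendsto_iff_norm_sub_tendsto_zero]
  simpa using hall.sqrt
end

section
/- Let ψ : ℝ → ℝ be convex, even (ψ(−t) = ψ(t) for all t), non-negative, nondecreasing on [0, ∞), with ψ(0) = 0, differentiable on (0, ∞), and admitting a positive right derivative at zero d₊ = lim_{h→0⁺} ψ(h)/h > 0. Let δ > 0 and β ∈ ℝ with |β| > δ·d₊, and let α̂ be the unique minimizer of t ↦ δψ(t) + ½(β − t)². Then α̂ ≠ 0, α̂ has the same sign as β, and α̂ satisfies β = α̂ + δ·ψ′(α̂), where ψ′ denotes the derivative of ψ away from 0 (extended to negative arguments by oddness, ψ′(−t) = −ψ′(t)). -/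
/-!
If the minimizer were `0`, comparing its value with that at `±h` (the sign being that of `β`)
would give `|β| ≤ δ * (ψ h / h) + h / 2` for all `h > 0`, hence `|β| ≤ δ * d` in the limit
`h → 0⁺`. Comparing `αhat` with `-αhat` and using evenness gives `0 ≤ β * αhat`, so the signs
agree. Finally `ψ` is differentiable off `0` (by evenness on the negative side), and Fermat's
rule at `αhat ≠ 0` is the stationarity equation.
-/

/-- For a convex, even, non-negative penalty `ψ` nondecreasing on `[0,∞)` with `ψ(0) = 0`,
differentiable on `(0,∞)`, and with positive right derivative `d` at zero, if `|β| > δ·d`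
then the minimizer `α̂` of `t ↦ δψ(t) + ½(β - t)²` is nonzero, has the same sign as `β`,
and satisfies `β = α̂ + δ·ψ'(α̂)` (the derivative on negative arguments being determined by
evenness of `ψ`). -/
theorem stmt_14 (ψ : ℝ → ℝ) (hconv : ConvexOn ℝ Set.univ ψ)
    (heven : ∀ t : ℝ, ψ (-t) = ψ t) (hnonneg : ∀ t : ℝ, 0 ≤ ψ t)
    (hmono : MonotoneOn ψ (Set.Ici (0 : ℝ))) (h0 : ψ 0 = 0)
    (hdiff : ∀ t : ℝ, 0 < t → DifferentiableAt ℝ ψ t)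
    (d : ℝ) (hd : Filter.Tendsto (fun h : ℝ => ψ h / h) (nhdsWithin 0 (Set.Ioi 0)) (nhds d))
    (hdpos : 0 < d)
    (δ : ℝ) (hδ : 0 < δ) (β αhat : ℝ)
    (hmin : ∀ t : ℝ, δ * ψ αhat + (1/2 : ℝ) * (β - αhat)^2 ≤ δ * ψ t + (1/2 : ℝ) * (β - t)^2)
    (hβ : δ * d < |β|) :
    αhat ≠ 0 ∧ (0 < β → 0 < αhat) ∧ (β < 0 → αhat < 0) ∧
      β = αhat + δ * deriv ψ αhat := by
  have hne : αhat ≠ 0 := by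
    rintro rfl
    have key : ∀ h : ℝ, 0 < h → |β| ≤ δ * (ψ h / h) + h / 2 := by
      intro h hh
      have hmul : |β| * h ≤ δ * ψ h + h ^ 2 / 2 := by
        rcases abs_cases β with ⟨hb, _⟩ | ⟨hb, _⟩
        · have := hmin h
          rw [h0] at this
          rw [hb]
          nlinarith
        · have := hmin (-h)
          rw [h0, heven] at this
          rw [hb]
          nlinarith
      have heq : δ * (ψ h / h) + h / 2 = (δ * ψ h + h ^ 2 / 2) / h := by
        field_simp
      rw [heq, le_div_iff₀ hh]
      exact hmul
    have hid : Filter.Tendsto (fun h : ℝ => h / 2) (nhdsWithin 0 (Set.Ioi 0)) (nhds (0 / 2)) :=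
      ((continuous_id.div_const 2).tendsto 0).mono_left nhdsWithin_le_nhds
    have hle : |β| ≤ δ * d + 0 / 2 :=
      ge_of_tendsto ((hd.const_mul δ).add hid)
        (Filter.eventually_of_mem self_mem_nhdsWithin key)
    linarith
  have hsign : 0 ≤ β * αhat := by
    have := hmin (-αhat)
    rw [heven] at this
    nlinarith
  have hda : DifferentiableAt ℝ ψ αhat := by
    rcases lt_or_gt_of_ne hne with hneg | hpos
    · have hcomp : DifferentiableAt ℝ (fun t => ψ (-t)) αhat :=
        (hdiff (-αhat) (by linarith)).comp αhat differentiableAt_id.neg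
      simpa only [heven] using hcomp
    · exact hdiff αhat hpos
  refine ⟨hne, fun hb => ?_, fun hb => ?_, ?_⟩
  · exact lt_of_le_of_ne (nonneg_of_mul_nonneg_right hsign hb) hne.symm
  · refine lt_of_le_of_ne ?_ hne
    by_contra! hpos
    nlinarith
  · have hderiv : HasDerivAt (fun t => δ * ψ t + (1/2 : ℝ) * (β - t) ^ 2)
        (δ * deriv ψ αhat + (1/2 : ℝ) * (2 * (β - αhat) * (-1))) αhat := by
      have hquad : HasDerivAt (fun t : ℝ => (β - t) ^ 2) (2 * (β - αhat) * (-1)) αhat := by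
        simpa using ((hasDerivAt_id αhat).const_sub β).fun_pow 2
      exact (hda.hasDerivAt.const_mul δ).add (hquad.const_mul (1/2 : ℝ))
    have hfermat := IsLocalMin.hasDerivAt_eq_zero (Filter.Eventually.of_forall hmin) hderiv
    linarith
end

section
/- Let z ∈ ℝⁿ with zᵢ > 0 for all i, let H ∈ ℝ^{n×n} be injective (trivial kernel), let Φ ∈ ℝ^{n×n} be an orthogonal matrix (ΦᵀΦ = I), let λ > 0, and let S = {α ∈ ℝⁿ : (HΦα)ᵢ ≥ 0 for all i}. Define J(α) = Σᵢ ½(zᵢ − 2√((HΦα)ᵢ + 3/8))² + λ·Σᵢ |αᵢ| for α ∈ S. Then J attains its minimum over S at exactly one point. -/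
/-!
Write `L α = HΦα`, an injective linear map. Expanding the square,
`½(z - 2√(u + 3/8))² = ½z² - 2z√(u + 3/8) + 2(u + 3/8)`, which is strictly convex on `u ≥ 0`
because `z > 0` and the square root is strictly concave.

* Uniqueness: if `a ≠ b` are two minimizers, then `L a` and `L b` differ in some coordinate, so
  the objective at the (feasible) midpoint lies strictly below the average of its values at
  `a` and `b` (`anscombe_midpoint`, `anscombe_midpoint_lt`), contradicting minimality.
* Existence: the fidelity term is nonnegative, so the objective dominates `λ‖α‖₁ ≥ λ‖α‖₂` and is
  coercive (`norm_le_sum_abs`); it is continuous and the feasible set is closed and contains `0`.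
-/

lemma anscombe_midpoint_lt {z u v : ℝ} (hz : 0 < z) (hu : 0 ≤ u) (hv : 0 ≤ v) (huv : u ≠ v) :
    (1/2 : ℝ) * (z - 2 * Real.sqrt ((u + v) / 2 + 3/8))^2 <
      ((1/2 : ℝ) * (z - 2 * Real.sqrt (u + 3/8))^2 +
        (1/2 : ℝ) * (z - 2 * Real.sqrt (v + 3/8))^2) / 2 := by
  have hs := Real.sq_sqrt (show 0 ≤ u + 3/8 by linarith)
  have ht := Real.sq_sqrt (show 0 ≤ v + 3/8 by linarith)
  have hm := Real.sq_sqrt (show 0 ≤ (u + v) / 2 + 3/8 by linarith)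
  have hm0 := Real.sqrt_nonneg ((u + v) / 2 + 3/8)
  generalize Real.sqrt (u + 3/8) = s at *
  generalize Real.sqrt (v + 3/8) = t at *
  generalize Real.sqrt ((u + v) / 2 + 3/8) = m at *
  have hst : s - t ≠ 0 := by
    intro h
    have h' : s = t := by linarith
    subst h'
    exact huv (by linarith)
  have hpos : 0 < (s - t)^2 := by positivity
  have key : s + t < 2 * m := by
    apply lt_of_pow_lt_pow_left₀ 2 (by positivity)
    nlinarith
  nlinarith [mul_pos hz (sub_pos.mpr key)]

lemma anscombe_midpoint {z u v : ℝ} (hz : 0 < z) (hu : 0 ≤ u) (hv : 0 ≤ v) :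
    (1/2 : ℝ) * (z - 2 * Real.sqrt ((u + v) / 2 + 3/8))^2 ≤
      ((1/2 : ℝ) * (z - 2 * Real.sqrt (u + 3/8))^2 +
        (1/2 : ℝ) * (z - 2 * Real.sqrt (v + 3/8))^2) / 2 := by
  rcases eq_or_ne u v with rfl | h
  · rw [add_self_div_two, add_self_div_two]
  · exact (anscombe_midpoint_lt hz hu hv h).le

lemma norm_le_sum_abs {n : ℕ} (x : EuclideanSpace ℝ (Fin n)) : ‖x‖ ≤ ∑ i, |x i| := by
  rw [EuclideanSpace.norm_eq]
  apply Real.sqrt_le_iff.mpr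
  exact ⟨Finset.sum_nonneg fun i _ => abs_nonneg _,
    Finset.sum_sq_le_sq_sum_of_nonneg fun i _ => abs_nonneg _⟩


/-- Uniqueness of the solution to the constrained ℓ₁-regularized Anscombe deconvolution
problem when `zᵢ > 0`, `H` is injective and `Φ` is orthogonal: the objective
`J(α) = Σᵢ ½(zᵢ - 2√((HΦα)ᵢ + 3/8))² + λ Σᵢ |αᵢ|` attains its minimum over the feasible
set `S = {α : HΦα ≥ 0}` at exactly one point. -/
theorem stmt_19 (n : ℕ) (z : Fin n → ℝ) (hz : ∀ i, 0 < z i)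
    (H : Matrix (Fin n) (Fin n) ℝ)
    (hH : ∀ x : Fin n → ℝ, H.mulVec x = 0 → x = 0)
    (Φ : Matrix (Fin n) (Fin n) ℝ) (hΦ : Φ.transpose * Φ = 1)
    (lam : ℝ) (hlam : 0 < lam) :
    ∃! αstar : EuclideanSpace ℝ (Fin n),
      αstar ∈ {α : EuclideanSpace ℝ (Fin n) | ∀ i, 0 ≤ H.mulVec (Φ.mulVec α) i} ∧
      ∀ α ∈ {α : EuclideanSpace ℝ (Fin n) | ∀ i, 0 ≤ H.mulVec (Φ.mulVec α) i},
        ∑ i, (1/2 : ℝ) * (z i - 2 * Real.sqrt (H.mulVec (Φ.mulVec αstar) i + 3/8))^2 +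
            lam * ∑ i, |αstar i| ≤
        ∑ i, (1/2 : ℝ) * (z i - 2 * Real.sqrt (H.mulVec (Φ.mulVec α) i + 3/8))^2 +
            lam * ∑ i, |α i| := by

  have hcont : ∀ i, Continuous fun α : EuclideanSpace ℝ (Fin n) =>
      H.mulVec (Φ.mulVec α) i := by
    intro i
    have : Continuous fun α : EuclideanSpace ℝ (Fin n) => H.mulVec (Φ.mulVec α) :=
      continuous_const.matrix_mulVec
        (continuous_const.matrix_mulVec (PiLp.continuous_ofLp 2 _))
    exact (continuous_apply i).comp this
  apply existsUnique_of_exists_of_unique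
  · let J : EuclideanSpace ℝ (Fin n) → ℝ := fun α =>
      ∑ i, (1/2 : ℝ) * (z i - 2 * Real.sqrt (H.mulVec (Φ.mulVec α) i + 3/8))^2 +
            lam * ∑ i, |α i|
    have hJ : Continuous J := by
      dsimp only [J]
      fun_prop
    have hS : IsClosed {α : EuclideanSpace ℝ (Fin n) | ∀ i, 0 ≤ H.mulVec (Φ.mulVec α) i} := by
      rw [Set.ofPred_forall]
      exact isClosed_iInter fun i => isClosed_le continuous_const (hcont i)
    have hJlb : ∀ α, lam * ‖α‖ ≤ J α := by
      intro α
      have h1 := mul_le_mul_of_nonneg_left (norm_le_sum_abs α) hlam.le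
      have h2 : 0 ≤ ∑ i, (1/2 : ℝ) *
          (z i - 2 * Real.sqrt (H.mulVec (Φ.mulVec α) i + 3/8))^2 :=
        Finset.sum_nonneg fun i _ => by positivity
      dsimp only [J]
      linarith
    have hlim : Filter.Tendsto J (Filter.cocompact _) Filter.atTop :=
      Filter.tendsto_atTop_mono hJlb
        ((tendsto_norm_cocompact_atTop).const_mul_atTop hlam)
    obtain ⟨x, hx, hmin⟩ := hJ.continuousOn.exists_isMinOn' hS (x₀ := 0)
      (by intro i; simp)
      (Filter.Eventually.filter_mono inf_le_left (hlim.eventually_ge_atTop (J 0)))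
    exact ⟨x, hx, fun α hα => hmin hα⟩
  · rintro a b ⟨ha, hamin⟩ ⟨hb, hbmin⟩
    by_contra hab
    have hmid : ∀ i, H.mulVec (Φ.mulVec ((1/2 : ℝ) • (a + b) : EuclideanSpace ℝ (Fin n))) i =
        (H.mulVec (Φ.mulVec a) i + H.mulVec (Φ.mulVec b) i) / 2 := by
      intro i
      simp only [WithLp.ofLp_smul, WithLp.ofLp_add, Matrix.mulVec_smul, Matrix.mulVec_add,
        Pi.smul_apply, Pi.add_apply, smul_eq_mul]
      ring
    have hne : ∃ i, H.mulVec (Φ.mulVec a) i ≠ H.mulVec (Φ.mulVec b) i := by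
      by_contra! h
      apply hab
      have h0 : Φ.mulVec (a.ofLp - b.ofLp) = 0 := by
        apply hH
        rw [Matrix.mulVec_sub, Matrix.mulVec_sub, sub_eq_zero]
        exact funext h
      have h1 : a.ofLp - b.ofLp = 0 := by
        rw [← Matrix.one_mulVec (a.ofLp - b.ofLp), ← hΦ, ← Matrix.mulVec_mulVec, h0,
          Matrix.mulVec_zero]
      exact WithLp.ofLp_injective 2 (sub_eq_zero.mp h1)
    have hmem : ∀ i,
        0 ≤ H.mulVec (Φ.mulVec ((1/2 : ℝ) • (a + b) : EuclideanSpace ℝ (Fin n))) i := by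
      intro i
      rw [hmid]
      have := ha i
      have := hb i
      linarith
    have hA := hamin _ hmem
    have hB := hbmin _ hmem
    have hfid : ∑ i, (1/2 : ℝ) * (z i - 2 * Real.sqrt (H.mulVec (Φ.mulVec
          ((1/2 : ℝ) • (a + b) : EuclideanSpace ℝ (Fin n))) i + 3/8))^2 <
        (∑ i, (1/2 : ℝ) * (z i - 2 * Real.sqrt (H.mulVec (Φ.mulVec a) i + 3/8))^2 +
        ∑ i, (1/2 : ℝ) * (z i - 2 * Real.sqrt (H.mulVec (Φ.mulVec b) i + 3/8))^2) / 2 := by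
      rw [← Finset.sum_add_distrib, Finset.sum_div]
      obtain ⟨j, hj⟩ := hne
      refine Finset.sum_lt_sum (fun i _ => ?_) ⟨j, Finset.mem_univ j, ?_⟩
      · rw [hmid]
        exact anscombe_midpoint (hz i) (ha i) (hb i)
      · rw [hmid]
        exact anscombe_midpoint_lt (hz j) (ha j) (hb j) hj
    have hpen : ∑ i, |((1/2 : ℝ) • (a + b) : EuclideanSpace ℝ (Fin n)) i| ≤
        (∑ i, |a i| + ∑ i, |b i|) / 2 := by
      rw [← Finset.sum_add_distrib, Finset.sum_div]
      refine Finset.sum_le_sum fun i _ => ?_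
      have := abs_add_le (a i) (b i)
      simp only [PiLp.smul_apply, PiLp.add_apply, smul_eq_mul, abs_mul]
      norm_num
      linarith
    have hpen' := mul_le_mul_of_nonneg_left hpen hlam.le
    linarith
end
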